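/- arXiv:math/9911235 — 2 statements merged into one kernel-verified Lean document; each statement's English description precedes it below -/
import Mathlib

section
/- For every integer g ≥ 1 there exist φ̃₁, …, φ̃_{2g} ∈ 𝒯 such that for every t ∈ ℝ, ([φ̃₁, φ̃₂] ∘ [φ̃₃, φ̃₄] ∘ ⋯ ∘ [φ̃_{2g−1}, φ̃_{2g}])(t) − t < 2 − 2g. -/
/-- `ψ` belongs to `𝒯`: it is an increasing homeomorphism of `ℝ` (an order
isomorphism of `ℝ`, which is automatically a homeomorphism) commuting with the
translation `t ↦ t + 1`, i.e. a lift of an orientation-preserving circle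
homeomorphism. -/
def CircleLift (ψ : ℝ ≃o ℝ) : Prop := ∀ t : ℝ, ψ (t + 1) = ψ t + 1

/-- The composition `ψ₁ ∘ ψ₂ ∘ ⋯ ∘ ψ_k` of a list `[ψ₁, ψ₂, …, ψ_k]`. -/
def composeList (L : List (ℝ ≃o ℝ)) : ℝ ≃o ℝ :=
  L.foldr (fun f acc => acc.trans f) (OrderIso.refl ℝ)

/-- The commutator `[f, g] = f ∘ g ∘ f⁻¹ ∘ g⁻¹`. -/
def commOI (f g : ℝ ≃o ℝ) : ℝ ≃o ℝ := (g.symm.trans f.symm).trans (g.trans f)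

open scoped AddConstMap commutatorElement unitInterval

/-! A commutator of lifts can move a point by any `d` with `|d| < 2`: if `p` fixes `0` and maps `a`
to `1 - a`, and `τ` is the translation by `a`, then `⁅τ * p⁻¹, τ⁻¹ * p⁆` moves `1 - 2 * a` by
`4 * a - 2`. Conjugating one such commutator by the translations by `-i * d` for `i = 0, …, g - 1`
lets every factor pick up the point where the previous factor dropped it, so the product moves some
point by exactly `g * d`. Monotonicity and commutation with `t ↦ t + 1` make any two displacements
of a lift differ by less than `1`. Hence for `d = 1 / g - 2` every displacement of the product is
less than `g * d + 1 = 2 - 2 * g`. -/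

theorem exists_eq_even_and_eq_odd {α : Type*} (a b : ℕ → α) :
    ∃ c : ℕ → α, (∀ i, c (2 * i) = a i) ∧ ∀ i, c (2 * i + 1) = b i :=
  ⟨Stream'.interleave a b, fun i => Stream'.get_interleave_left i a b,
    fun i => Stream'.get_interleave_right i a b⟩

theorem prod_ofFn_smul_eq {M α : Type*} [Monoid M] [MulAction M α] {f : ℕ → M} {x : ℕ → α}
    (h : ∀ i, f i • x (i + 1) = x i) (n : ℕ) :
    (List.ofFn fun i : Fin n => f i).prod • x n = x 0 := by
  induction n with
  | zero => simp
  | succ n ih =>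
    rw [List.ofFn_succ_last, List.prod_append, List.prod_singleton, mul_smul]
    exact (congrArg _ (h n)).trans ih

theorem exists_unitInterval_orderIso_apply_eq {a b : I} (ha : a ∈ Set.Ioo 0 1)
    (hb : b ∈ Set.Ioo 0 1) : ∃ e : I ≃o I, e a = b := by
  -- Transported to `[0, ∞]`, the required isomorphism is multiplication by `ρ b / ρ a`.
  let ρ : I ≃o ENNReal := ENNReal.orderIsoUnitIntervalBirational.symm
  have isUnit_ρ {x : I} (hx : x ∈ Set.Ioo 0 1) : IsUnit (ρ x) := by
    rw [ENNReal.isUnit_iff]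
    exact ⟨(ρ.map_bot ▸ ρ.strictMono hx.1).ne', (ρ.map_top ▸ ρ.strictMono hx.2).ne⟩
  obtain ⟨u, hu⟩ := isUnit_ρ ha
  obtain ⟨v, hv⟩ := isUnit_ρ hb
  refine ⟨(ρ.trans (ENNReal.mulLeftOrderIso _ (v * u⁻¹).isUnit)).trans ρ.symm, ?_⟩
  simp [← hu, OrderIso.symm_apply_eq, ← hv]

/-- The extension of an increasing homeomorphism `e` of `[0, 1]` to a map of `ℝ` commuting with
`t ↦ t + 1`. -/
noncomputable def periodicExtension (e : I ≃o I) : ℝ →+c[1, 1] ℝ :=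
  AddConstMap.mkFract 1 fun x => (e ⟨x, Set.Ico_subset_Icc_self x.2⟩ : ℝ)

theorem periodicExtension_coe (e : I ≃o I) (x : I) : periodicExtension e x = e x := by
  obtain rfl | hx := eq_or_ne x 1
  · have h0 : e 0 = 0 := e.map_bot
    have h1 : e 1 = 1 := e.map_top
    simp [periodicExtension, AddConstMap.mkFract, h0, h1]
  · have hx' : (x : ℝ) ∈ Set.Ico 0 1 := ⟨x.2.1, unitInterval.lt_one_iff_ne_one.2 hx⟩
    simp [periodicExtension, AddConstMap.mkFract, Int.fract_eq_self.2 hx',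
      Int.floor_eq_zero_iff.2 hx']

theorem strictMono_periodicExtension (e : I ≃o I) : StrictMono (periodicExtension e) := by
  rw [AddConstMapClass.strictMono_iff_Icc one_pos 0, zero_add]
  intro x hx y hy hxy
  rw [periodicExtension_coe e ⟨x, hx⟩, periodicExtension_coe e ⟨y, hy⟩]
  exact e.strictMono hxy

theorem rightInverse_periodicExtension_symm (e : I ≃o I) :
    Function.RightInverse (periodicExtension e.symm) (periodicExtension e) := by
  intro t
  rw [← Int.fract_add_floor t]
  have hfract := periodicExtension_coe e.symm ⟨Int.fract t, unitInterval.fract_mem t⟩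
  rw [AddConstMapClass.map_add_int, hfract, AddConstMapClass.map_add_int, periodicExtension_coe,
    OrderIso.apply_symm_apply]

/-- The group `𝒯` of lifts of orientation-preserving homeomorphisms of the circle, with composition
as multiplication; it acts on `ℝ` by evaluation. -/
def circleLiftGroup : Subgroup (ℝ ≃o ℝ) where
  carrier := {ψ | CircleLift ψ}
  one_mem' _ := rfl
  mul_mem' {φ ψ} hφ hψ t := by
    rw [RelIso.mul_apply, RelIso.mul_apply, hψ, hφ]
  inv_mem' {ψ} hψ t := by
    rw [← ψ.injective.eq_iff, hψ, RelIso.apply_inv_self, RelIso.apply_inv_self]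

theorem composeList_eq_prod (L : List (ℝ ≃o ℝ)) : composeList L = L.prod := rfl

namespace circleLiftGroup

theorem smul_add_one (ψ : circleLiftGroup) (t : ℝ) : ψ • (t + 1) = ψ • t + 1 := ψ.2 t

theorem smul_add_intCast (ψ : circleLiftGroup) (t : ℝ) (m : ℤ) : ψ • (t + m) = ψ • t + m :=
  AddConstMapClass.map_add_int (⟨(ψ • ·), smul_add_one ψ⟩ : ℝ →+c[1, 1] ℝ) t m

theorem monotone_smul (ψ : circleLiftGroup) : Monotone fun t : ℝ => ψ • t :=
  ψ.1.monotone

theorem smul_sub_lt_smul_sub_add_one (ψ : circleLiftGroup) (s t : ℝ) :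
    ψ • t - t < ψ • s - s + 1 := by
  have hle : ψ • t ≤ ψ • s + ⌈t - s⌉ := by
    rw [← smul_add_intCast]
    exact monotone_smul ψ (sub_le_iff_le_add'.1 (Int.le_ceil _))
  linarith [Int.ceil_lt_add_one (t - s)]

/-- The translation `t ↦ t + s`. -/
def translation (s : ℝ) : circleLiftGroup :=
  ⟨OrderIso.addRight s, fun t => add_right_comm t 1 s⟩

theorem translation_smul (s t : ℝ) : translation s • t = t + s := rfl

theorem translation_inv_smul (s t : ℝ) : (translation s)⁻¹ • t = t - s := by
  rw [inv_smul_eq_iff, translation_smul, sub_add_cancel]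

/-- The increasing homeomorphism of `ℝ` underlying `periodicExtension e`, as an element of `𝒯`. -/
noncomputable def ofUnitInterval (e : I ≃o I) : circleLiftGroup :=
  ⟨(strictMono_periodicExtension e).orderIsoOfRightInverse _ _
    (rightInverse_periodicExtension_symm e), AddConstMapClass.map_add_one (periodicExtension e)⟩

theorem ofUnitInterval_smul_coe (e : I ≃o I) (x : I) : ofUnitInterval e • (x : ℝ) = e x :=
  periodicExtension_coe e x

theorem exists_smul_zero_eq_zero_and_smul_eq {a b : ℝ} (ha : a ∈ Set.Ioo 0 1)
    (hb : b ∈ Set.Ioo 0 1) : ∃ ψ : circleLiftGroup, ψ • (0 : ℝ) = 0 ∧ ψ • a = b := by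
  obtain ⟨e, he⟩ := exists_unitInterval_orderIso_apply_eq
    (a := ⟨a, Set.Ioo_subset_Icc_self ha⟩) (b := ⟨b, Set.Ioo_subset_Icc_self hb⟩) ha hb
  refine ⟨ofUnitInterval e, ?_, ?_⟩
  · have h0 : e 0 = 0 := e.map_bot
    simpa [h0] using ofUnitInterval_smul_coe e 0
  · simpa [he] using ofUnitInterval_smul_coe e ⟨a, Set.Ioo_subset_Icc_self ha⟩

theorem exists_commutator_smul_eq_add {d : ℝ} (hd : |d| < 2) :
    ∃ f k : circleLiftGroup, ∃ y : ℝ, ⁅f, k⁆ • y = y + d := by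
  obtain ⟨hd_lower, hd_upper⟩ := abs_lt.1 hd
  obtain ⟨a, rfl⟩ : ∃ a, d = 4 * a - 2 := ⟨(d + 2) / 4, by ring⟩
  obtain ⟨p, hp_zero, hp_a⟩ := exists_smul_zero_eq_zero_and_smul_eq (a := a) (b := 1 - a)
    ⟨by linarith, by linarith⟩ ⟨by linarith, by linarith⟩
  have hp_inv_one_sub : p⁻¹ • (1 - a) = a := by rw [inv_smul_eq_iff, hp_a]
  have hp_inv_neg : p⁻¹ • (-a) = a - 1 := by
    rw [eq_sub_iff_add_eq, ← smul_add_one, neg_add_eq_sub, hp_inv_one_sub]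
  let τ := translation a
  refine ⟨τ * p⁻¹, τ⁻¹ * p, 1 - 2 * a, ?_⟩
  calc
    ⁅τ * p⁻¹, τ⁻¹ * p⁆ • (1 - 2 * a)
        = τ • p⁻¹ • τ⁻¹ • p • p • τ⁻¹ • p⁻¹ • τ • (1 - 2 * a) := by
      simp only [commutatorElement_def, mul_inv_rev, inv_inv, mul_smul]
    _ = τ • p⁻¹ • τ⁻¹ • p • p • τ⁻¹ • p⁻¹ • (1 - a) := by
      rw [translation_smul a (1 - 2 * a), show 1 - 2 * a + a = 1 - a by ring]
    _ = τ • p⁻¹ • τ⁻¹ • p • p • (0 : ℝ) := by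
      rw [hp_inv_one_sub, translation_inv_smul a a, sub_self]
    _ = τ • p⁻¹ • (-a) := by
      rw [hp_zero, hp_zero, translation_inv_smul a 0, zero_sub]
    _ = 1 - 2 * a + (4 * a - 2) := by
      rw [hp_inv_neg, translation_smul]
      ring

theorem exists_prod_commutator_smul_eq_add {d : ℝ} (hd : |d| < 2) (n : ℕ) :
    ∃ f k : ℕ → circleLiftGroup, ∃ y : ℝ,
      (List.ofFn fun i : Fin n => ⁅f i, k i⁆).prod • y = y + n * d := by
  obtain ⟨f, k, y, hy⟩ := exists_commutator_smul_eq_add hd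
  let τ (i : ℕ) := translation (-(i * d))
  refine ⟨fun i => τ i * f * (τ i)⁻¹, fun i => τ i * k * (τ i)⁻¹, y + d - n * d, ?_⟩
  have hstep (i : ℕ) : ⁅τ i * f * (τ i)⁻¹, τ i * k * (τ i)⁻¹⁆ • (y + d - (i + 1 : ℕ) * d) =
      y + d - i * d := by
    rw [← conjugate_commutatorElement, mul_smul, mul_smul, translation_inv_smul,
      show y + d - (i + 1 : ℕ) * d - -(i * d) = y by push_cast; ring, hy,
      translation_smul, sub_eq_add_neg]
  simpa using prod_ofFn_smul_eq (x := fun i : ℕ => y + d - i * d) hstep n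

theorem composeList_ofFn_commOI {n : ℕ} (f k : Fin n → circleLiftGroup) :
    composeList (List.ofFn fun i => commOI (f i) (k i)) =
      ((List.ofFn fun i => ⁅f i, k i⁆).prod : circleLiftGroup) := by
  rw [composeList_eq_prod, Subgroup.val_list_prod, List.map_ofFn]
  rfl

end circleLiftGroup

/-- For every integer `g ≥ 1` there exist `φ̃₁, …, φ̃_{2g} ∈ 𝒯` such that for
every real `t`, `([φ̃₁, φ̃₂] ∘ ⋯ ∘ [φ̃_{2g-1}, φ̃_{2g}]) t - t < 2 - 2g`. -/
theorem exists_commutator_product_lt (g : ℕ) (hg : 1 ≤ g) :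
    ∃ φ : Fin (2 * g) → ℝ ≃o ℝ, (∀ i, CircleLift (φ i)) ∧
      ∀ t : ℝ,
        composeList (List.ofFn fun i : Fin g =>
            commOI (φ ⟨2 * i.1, by have := i.2; omega⟩)
              (φ ⟨2 * i.1 + 1, by have := i.2; omega⟩)) t - t
          < 2 - 2 * g := by
  have hd : |1 / (g : ℝ) - 2| < 2 := by
    have hinv_pos : 0 < 1 / (g : ℝ) := by positivity
    have hinv_le : 1 / (g : ℝ) ≤ 1 := by simpa using Nat.cast_inv_le_one g
    exact abs_lt.2 ⟨by linarith, by linarith⟩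
  obtain ⟨f, k, y, hy⟩ := circleLiftGroup.exists_prod_commutator_smul_eq_add hd g
  obtain ⟨φ, hφ_even, hφ_odd⟩ := exists_eq_even_and_eq_odd f k
  let C := (List.ofFn fun i : Fin g => ⁅f i, k i⁆).prod
  refine ⟨fun i => φ i, fun i => (φ i).2, fun t => ?_⟩
  simp only [hφ_even, hφ_odd]
  rw [circleLiftGroup.composeList_ofFn_commOI]
  calc
    C • t - t < C • y - y + 1 := circleLiftGroup.smul_sub_lt_smul_sub_add_one C y t
    _ = 2 - 2 * g := by
      rw [hy]
      field_simp
      ring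
end

section
/- Let g ≥ 1 be an integer. For every real number c with 1 − 2g < c ≤ 0 there exist φ̃₁, …, φ̃_{2g} ∈ 𝒯 such that the translation number of the product of commutators [φ̃₁, φ̃₂] ∘ [φ̃₃, φ̃₄] ∘ ⋯ ∘ [φ̃_{2g−1}, φ̃_{2g}] is equal to c. -/
/-!
For `0 < d < 1` choose a lift `f` mapping an arc of length `1 - d` starting at `p` onto one of
length `d`, and a lift `k` doing the opposite at the same point `p`. With the images placed
suitably, `[f, k]` moves a given point by exactly `-(2 - 4d)`, that is, by any prescribed amount in
`(-2, 2)`. Chaining `g` such commutators, each applied at the point reached by the one before,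
gives a product moving some point by any prescribed integer `m` with `|m| < 2g`; its translation
number is then `m`.

Joining each `f` to the identity through convex combinations deforms this product continuously to
the identity. Since the translation number is a uniform limit of continuous functions along such a
deformation, it takes every value between `0` and `m`; the choices `m = ±(2g - 1)` yield all `c`
with `|c| ≤ 2g - 1`.
-/

open CircleDeg1Lift
open scoped commutatorElement

section CommutatorProd

variable {G H : Type*} [Group G] [Group H] {n : ℕ}

/-- The ordered product `[f₁, k₁] ⋯ [fₙ, kₙ]`, the value at `(f₁, k₁, …, fₙ, kₙ)` of the relator
word of a closed surface of genus `n`. -/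
def commutatorProd (f k : Fin n → G) : G :=
  (List.ofFn fun i => ⁅f i, k i⁆).prod

theorem commutatorProd_one_left (k : Fin n → G) : commutatorProd 1 k = 1 := by
  simp only [commutatorProd, Pi.one_apply, commutatorElement_one_left, List.ofFn_const,
    List.prod_replicate, one_pow]

theorem map_commutatorProd (φ : G →* H) (f k : Fin n → G) :
    φ (commutatorProd f k) = commutatorProd (fun i => φ (f i)) fun i => φ (k i) := by
  simp only [commutatorProd, map_list_prod, List.map_ofFn, Function.comp_def, map_commutatorElement]

end CommutatorProd

theorem prod_ofFn_smul_eq_of_chain {M X : Type*} [Monoid M] [MulAction M X] {n : ℕ}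
    (a : Fin n → M) (x : Fin (n + 1) → X) (h : ∀ i, a i • x i.succ = x i.castSucc) :
    (List.ofFn a).prod • x (Fin.last n) = x 0 := by
  induction n with
  | zero => exact one_smul M _
  | succ n ih =>
    rw [List.ofFn_succ, List.prod_cons, mul_smul, ← Fin.succ_last,
      ih (fun i => a i.succ) (fun i => x i.succ) fun i => h i.succ]
    exact h 0

section JointlyContinuous

variable {S α β Φ : Type*} [TopologicalSpace S] [TopologicalSpace α] [TopologicalSpace β]

/-- Joint continuity of a family of bundled maps in the parameter and the variable. It replaces
continuity with respect to a topology on the type of maps, since order isomorphisms and lifts carry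
none in Mathlib. -/
def JointlyContinuous [FunLike Φ α β] (F : S → Φ) : Prop :=
  Continuous fun q : S × α => F q.1 q.2

namespace JointlyContinuous

section Preorder

variable [Preorder α]

theorem const {f : α ≃o α} (hf : Continuous f) : JointlyContinuous fun _ : S => f :=
  hf.comp continuous_snd

theorem mul {F G : S → α ≃o α} (hF : JointlyContinuous F) (hG : JointlyContinuous G) :
    JointlyContinuous fun s => F s * G s :=
  Continuous.comp hF (continuous_fst.prodMk hG)

theorem prod_ofFn {n : ℕ} {F : S → Fin n → α ≃o α}
    (hF : ∀ i, JointlyContinuous fun s => F s i) :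
    JointlyContinuous fun s => (List.ofFn (F s)).prod := by
  induction n with
  | zero => simpa only [List.ofFn_zero, List.prod_nil] using const continuous_id
  | succ n ih =>
    simp only [List.ofFn_succ, List.prod_cons]
    exact (hF 0).mul (ih fun i => hF i.succ)

end Preorder

variable [LinearOrder α] [OrderTopology α]

theorem inv {F : S → α ≃o α} (hF : JointlyContinuous F) : JointlyContinuous fun s => (F s)⁻¹ := by
  refine continuous_iff_continuousAt.2 fun ⟨s, y⟩ => ?_
  have hFa (a : α) : Continuous fun q : S × α => F q.1 a :=
    Continuous.comp hF (continuous_fst.prodMk continuous_const)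
  refine tendsto_order.2 ⟨fun a ha => ?_, fun a ha => ?_⟩
  · filter_upwards [(isOpen_lt (hFa a) continuous_snd).mem_nhds ((F s).lt_symm_apply.1 ha)]
      with q hq using (F q.1).lt_symm_apply.2 hq
  · filter_upwards [(isOpen_lt continuous_snd (hFa a)).mem_nhds ((F s).symm_apply_lt.1 ha)]
      with q hq using (F q.1).symm_apply_lt.2 hq

theorem commutatorProd {n : ℕ} {F G : S → Fin n → α ≃o α}
    (hF : ∀ i, JointlyContinuous fun s => F s i) (hG : ∀ i, JointlyContinuous fun s => G s i) :
    JointlyContinuous fun s => commutatorProd (F s) (G s) :=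
  prod_ofFn fun i => (((hF i).mul (hG i)).mul (hF i).inv).mul (hG i).inv

end JointlyContinuous

end JointlyContinuous

theorem dist_pow_zero_div_translationNumber_le (f : CircleDeg1Lift) {n : ℕ} (hn : 0 < n) :
    dist ((f ^ n) 0 / n) (translationNumber f) ≤ 1 / n := by
  have hn' : (0 : ℝ) < n := Nat.cast_pos.2 hn
  have h := f.dist_pow_map_zero_mul_translationNumber_le n
  rw [Real.dist_eq] at h ⊢
  rwa [div_sub' hn'.ne', abs_div, abs_of_pos hn', div_le_div_iff_of_pos_right hn']

theorem tendstoUniformly_translationNumber {S : Type*} (F : S → CircleDeg1Lift) :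
    TendstoUniformly (fun (n : ℕ) s => (F s ^ n) 0 / n) (fun s => translationNumber (F s))
      Filter.atTop := by
  refine Metric.tendstoUniformly_iff.2 fun ε hε => ?_
  filter_upwards [Filter.eventually_gt_atTop 0,
    tendsto_one_div_atTop_nhds_zero_nat.eventually_lt_const hε] with n hn hnε s
  rw [dist_comm]
  exact (dist_pow_zero_div_translationNumber_le (F s) hn).trans_lt hnε

theorem JointlyContinuous.translationNumber {S : Type*} [TopologicalSpace S]
    {F : S → CircleDeg1Lift} (hF : JointlyContinuous F) :
    Continuous fun s => translationNumber (F s) := by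
  have hpow (n : ℕ) : Continuous fun s => (F s ^ n) 0 := by
    induction n with
    | zero => simpa only [pow_zero] using continuous_const
    | succ n ih =>
      simp only [pow_succ', mul_apply]
      exact Continuous.comp hF (continuous_id.prodMk ih)
  exact (tendstoUniformly_translationNumber F).continuous
    (Filter.Frequently.of_forall fun n => (hpow n).div_const _)

/-- The convex combination `(1 - s) f + s g` of two lifts. -/
noncomputable def interpolate (f g : CircleDeg1Lift) (s : unitInterval) : CircleDeg1Lift where
  toFun x := AffineMap.lineMap (f x) (g x) (s : ℝ)
  monotone' _ _ hxy := lineMap_mono_endpoints (f.mono hxy) (g.mono hxy) s.2.1 s.2.2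
  map_add_one' x := by
    simp only [map_add_one, AffineMap.lineMap_apply_ring']
    ring

theorem interpolate_apply (f g : CircleDeg1Lift) (s : unitInterval) (x : ℝ) :
    interpolate f g s x = AffineMap.lineMap (f x) (g x) (s : ℝ) := rfl

theorem jointlyContinuous_interpolate {f g : CircleDeg1Lift} (hf : Continuous f)
    (hg : Continuous g) : JointlyContinuous (interpolate f g) := by
  simp only [JointlyContinuous, interpolate_apply, AffineMap.lineMap_apply_ring']
  fun_prop

theorem isUnit_interpolate (f g : CircleDeg1Liftˣ) (s : unitInterval) :
    IsUnit (interpolate f g s) := by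
  refine isUnit_iff_bijective.2 ⟨StrictMono.injective fun x y hxy => ?_, ?_⟩
  · exact lineMap_strict_mono_endpoints ((toOrderIso f).strictMono hxy)
      ((toOrderIso g).strictMono hxy) s.2.1 s.2.2
  · have hcont := jointlyContinuous_interpolate (toOrderIso f).continuous (toOrderIso g).continuous
    exact (continuous_iff_surjective _).1 (hcont.comp (continuous_const.prodMk continuous_id))

theorem exists_jointlyContinuous_path (f g : CircleDeg1Liftˣ) :
    ∃ F : unitInterval → CircleDeg1Liftˣ, F 0 = f ∧ F 1 = g ∧
      JointlyContinuous fun s => toOrderIso (F s) := by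
  refine ⟨fun s => (isUnit_interpolate f g s).unit, ?_, ?_, ?_⟩
  · ext x
    simp [interpolate_apply]
  · ext x
    simp [interpolate_apply]
  · exact jointlyContinuous_interpolate (toOrderIso f).continuous (toOrderIso g).continuous

/-- The lift that fixes every integer and is `t ↦ t ^ p` on `[0, 1)`. -/
noncomputable def fractRPow (p : ℝ) (hp : 0 < p) : CircleDeg1Lift where
  toFun x := ⌊x⌋ + Int.fract x ^ p
  monotone' x y hxy := by
    rcases (Int.floor_mono hxy).lt_or_eq with hlt | heq
    · have hfloor : (⌊x⌋ : ℝ) + 1 ≤ ⌊y⌋ := by exact_mod_cast hlt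
      have hx := Real.rpow_le_one (Int.fract_nonneg x) (Int.fract_lt_one x).le hp.le
      have hy := Real.rpow_nonneg (Int.fract_nonneg y) p
      linarith
    · have hfract : Int.fract x ≤ Int.fract y := by
        rw [Int.fract, Int.fract, heq]
        linarith
      simpa only [heq, add_le_add_iff_left] using
        Real.rpow_le_rpow (Int.fract_nonneg x) hfract hp.le
  map_add_one' x := by
    rw [Int.floor_add_one, Int.fract_add_one, Int.cast_add, Int.cast_one, add_right_comm]

theorem fractRPow_apply {p : ℝ} (hp : 0 < p) (x : ℝ) :
    fractRPow p hp x = ⌊x⌋ + Int.fract x ^ p := rfl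

theorem fractRPow_apply_of_mem_Ico {p : ℝ} (hp : 0 < p) {x : ℝ} (hx : x ∈ Set.Ico (0 : ℝ) 1) :
    fractRPow p hp x = x ^ p := by
  rw [fractRPow_apply, Int.floor_eq_zero_iff.2 hx, Int.fract_eq_self.2 hx, Int.cast_zero, zero_add]

theorem fractRPow_mul_fractRPow {p q : ℝ} (hp : 0 < p) (hq : 0 < q) :
    fractRPow q hq * fractRPow p hp = fractRPow (p * q) (mul_pos hp hq) := by
  ext x
  have hmem : Int.fract x ^ p ∈ Set.Ico (0 : ℝ) 1 :=
    ⟨Real.rpow_nonneg (Int.fract_nonneg x) p,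
      Real.rpow_lt_one (Int.fract_nonneg x) (Int.fract_lt_one x) hp⟩
  rw [mul_apply, fractRPow_apply hp, map_int_add, fractRPow_apply_of_mem_Ico hq hmem,
    fractRPow_apply, Real.rpow_mul (Int.fract_nonneg x)]

theorem fractRPow_one : fractRPow 1 one_pos = 1 := by
  ext x
  rw [fractRPow_apply, Real.rpow_one, Int.floor_add_fract, coe_one, id]

theorem isUnit_fractRPow {p : ℝ} (hp : 0 < p) : IsUnit (fractRPow p hp) := by
  refine isUnit_iff_exists.2 ⟨fractRPow p⁻¹ (inv_pos.2 hp), ?_, ?_⟩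
  · simp only [fractRPow_mul_fractRPow, inv_mul_cancel₀ hp.ne', fractRPow_one]
  · simp only [fractRPow_mul_fractRPow, mul_inv_cancel₀ hp.ne', fractRPow_one]

theorem exists_units_apply_eq_apply_add_eq (t u : ℝ) {a b : ℝ} (ha : a ∈ Set.Ioo (0 : ℝ) 1)
    (hb : b ∈ Set.Ioo (0 : ℝ) 1) :
    ∃ f : CircleDeg1Liftˣ, f t = u ∧ f (t + a) = u + b := by
  have hp : 0 < Real.logb a b := Real.logb_pos_of_base_lt_one ha.1 ha.2 hb.1 hb.2
  have h0 : fractRPow _ hp 0 = 0 := by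
    rw [fractRPow_apply_of_mem_Ico hp ⟨le_rfl, one_pos⟩, Real.zero_rpow hp.ne']
  have ha' : fractRPow _ hp a = b := by
    rw [fractRPow_apply_of_mem_Ico hp ⟨ha.1.le, ha.2⟩, Real.rpow_logb ha.1 ha.2.ne hb.1]
  refine ⟨CircleDeg1Lift.translate (.ofAdd u) * (isUnit_fractRPow hp).unit *
    CircleDeg1Lift.translate (.ofAdd (-t)), ?_, ?_⟩
  · simp [h0]
  · simp [ha']

theorem exists_commutator_apply_eq (x : ℝ) {e : ℝ} (he : |e| < 2) :
    ∃ f k : CircleDeg1Liftˣ, toOrderIso ⁅f, k⁆ (x + e) = x := by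
  obtain ⟨he₁, he₂⟩ := abs_lt.1 he
  obtain ⟨d, rfl⟩ : ∃ d, e = 2 - 4 * d := ⟨(2 - e) / 4, by ring⟩
  have hd : d ∈ Set.Ioo (0 : ℝ) 1 := ⟨by linarith, by linarith⟩
  have hd' : 1 - d ∈ Set.Ioo (0 : ℝ) 1 := ⟨by linarith [hd.2], by linarith [hd.1]⟩
  obtain ⟨f, hf₁, hf₂⟩ := exists_units_apply_eq_apply_add_eq (x - 2 * d) (x - d) hd' hd
  obtain ⟨k, hk₁, hk₂⟩ :=
    exists_units_apply_eq_apply_add_eq (x - 2 * d) (x - 2 * d + (1 - d)) hd hd'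
  have hk_inv : (k⁻¹ : CircleDeg1Liftˣ) (x + (2 - 4 * d)) = x - d := by
    rw [show x + (2 - 4 * d) = k (x - 2 * d + d) by rw [hk₂]; ring, units_inv_apply_apply]
    ring
  have hf_inv : (f⁻¹ : CircleDeg1Liftˣ) (x - d) = x - 2 * d := by
    rw [← hf₁, units_inv_apply_apply]
  refine ⟨f, k, ?_⟩
  calc toOrderIso ⁅f, k⁆ (x + (2 - 4 * d))
      = f (k ((f⁻¹ : CircleDeg1Liftˣ) ((k⁻¹ : CircleDeg1Liftˣ) (x + (2 - 4 * d))))) := rfl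
    _ = f (x - 2 * d + (1 - d)) := by rw [hk_inv, hf_inv, hk₁]
    _ = x := by rw [hf₂]; ring

theorem exists_translationNumber_commutatorProd_eq_int {g : ℕ} {m : ℤ} (hm : |m| < 2 * g) :
    ∃ f k : Fin g → CircleDeg1Liftˣ,
      (commutatorProd f k).val.translationNumber = m := by
  have hg : (0 : ℝ) < g := by
    have := abs_nonneg m
    exact_mod_cast (by omega : 0 < g)
  have he : |(-m / g : ℝ)| < 2 := by
    rw [abs_div, abs_neg, Nat.abs_cast, div_lt_iff₀ hg]
    exact_mod_cast hm
  choose f k hfk using fun i : Fin g => exists_commutator_apply_eq (i * (-m / g : ℝ)) he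
  have hchain : toOrderIso (commutatorProd f k) (g * (-m / g : ℝ)) = 0 := by
    rw [map_commutatorProd]
    simpa [commutatorProd] using prod_ofFn_smul_eq_of_chain (fun i => toOrderIso ⁅f i, k i⁆)
      (fun i => (i * (-m / g) : ℝ)) fun i => by simpa [add_one_mul] using hfk i
  rw [mul_div_cancel₀ _ hg.ne'] at hchain
  refine ⟨f, k, translationNumber_of_eq_add_int _ (x := -m) ?_⟩
  rw [neg_add_cancel]
  exact hchain

theorem exists_translationNumber_commutatorProd_eq_of_mem_uIcc {g : ℕ}
    (f k : Fin g → CircleDeg1Liftˣ) {c : ℝ}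
    (hc : c ∈ Set.uIcc 0 (commutatorProd f k).val.translationNumber) :
    ∃ f' : Fin g → CircleDeg1Liftˣ,
      (commutatorProd f' k).val.translationNumber = c := by
  choose F hF₀ hF₁ hF using fun i => exists_jointlyContinuous_path 1 (f i)
  have hcont : Continuous fun s =>
      (commutatorProd (F · s) k).val.translationNumber := by
    have hprod : JointlyContinuous fun s => toOrderIso (commutatorProd (F · s) k) := by
      simpa only [map_commutatorProd] using
        JointlyContinuous.commutatorProd hF fun i => .const (f := toOrderIso (k i))
          (toOrderIso (k i)).continuous
    exact JointlyContinuous.translationNumber hprod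
  have hmem := (isPreconnected_range hcont).ordConnected.uIcc_subset
    (Set.mem_range_self 0) (Set.mem_range_self 1)
  simp only [hF₀, hF₁, ← Pi.one_def, commutatorProd_one_left, Units.val_one,
    translationNumber_one] at hmem
  obtain ⟨s, hs⟩ := hmem hc
  exact ⟨fun i => F i s, hs⟩

theorem exists_translationNumber_commutatorProd_eq {g : ℕ} {c : ℝ} (hc : |c| ≤ 2 * g - 1) :
    ∃ f k : Fin g → CircleDeg1Liftˣ,
      (commutatorProd f k).val.translationNumber = c := by
  have hg : 1 ≤ 2 * g := by
    have := (abs_nonneg c).trans hc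
    exact_mod_cast (by linarith : (1 : ℝ) ≤ 2 * g)
  obtain ⟨m, hm, hcm⟩ : ∃ m : ℤ, |m| < 2 * g ∧ c ∈ Set.uIcc (0 : ℝ) m := by
    obtain ⟨hc₁, hc₂⟩ := abs_le.1 hc
    rcases le_total c 0 with h | h
    · refine ⟨1 - 2 * g, by rw [abs_lt]; omega, Set.mem_uIcc_of_ge ?_ h⟩
      push_cast
      linarith
    · refine ⟨2 * g - 1, by rw [abs_lt]; omega, Set.mem_uIcc_of_le h ?_⟩
      push_cast
      linarith
  obtain ⟨f, k, hfk⟩ := exists_translationNumber_commutatorProd_eq_int hm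
  obtain ⟨f', hf'⟩ := exists_translationNumber_commutatorProd_eq_of_mem_uIcc f k (hfk ▸ hcm)
  exact ⟨f', k, hf'⟩

theorem circleLift_toOrderIso (f : CircleDeg1Liftˣ) : CircleLift (toOrderIso f) :=
  map_add_one f

theorem composeList_ofFn_commOI {n : ℕ} (f k : Fin n → ℝ ≃o ℝ) :
    composeList (List.ofFn fun i => commOI (f i) (k i)) = commutatorProd f k := rfl

theorem two_mul_val_lt {n : ℕ} (i : Fin n) : 2 * i.1 < 2 * n := by omega

theorem two_mul_val_add_one_lt {n : ℕ} (i : Fin n) : 2 * i.1 + 1 < 2 * n := by omega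

theorem exists_interleave {X : Type*} {n : ℕ} (f k : Fin n → X) :
    ∃ φ : Fin (2 * n) → X, ∀ i : Fin n,
      φ ⟨2 * i, two_mul_val_lt i⟩ = f i ∧ φ ⟨2 * i + 1, two_mul_val_add_one_lt i⟩ = k i := by
  refine ⟨fun j => if j.1 % 2 = 0 then f ⟨j / 2, by omega⟩ else k ⟨j / 2, by omega⟩,
    fun i => ⟨?_, ?_⟩⟩
  · simp
  · simp [Nat.mul_add_div]

theorem exists_commutator_product_translation_number_general (g : ℕ) (c : ℝ)
    (hc : |c| ≤ 2 * g - 1) :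
    ∃ φ : Fin (2 * g) → ℝ ≃o ℝ, (∀ i, CircleLift (φ i)) ∧
      ∀ t : ℝ, Filter.Tendsto
        (fun n : ℕ =>
          ((⇑(composeList (List.ofFn fun i : Fin g =>
              commOI (φ ⟨2 * i, two_mul_val_lt i⟩)
                (φ ⟨2 * i + 1, two_mul_val_add_one_lt i⟩))))^[n] t - t) / (n : ℝ))
        Filter.atTop (nhds c) := by
  obtain ⟨f, k, rfl⟩ := exists_translationNumber_commutatorProd_eq hc
  obtain ⟨φ, hφ⟩ := exists_interleave f k
  refine ⟨fun j => toOrderIso (φ j), fun j => circleLift_toOrderIso (φ j), fun t => ?_⟩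
  simp only [hφ, composeList_ofFn_commOI, ← map_commutatorProd, coe_toOrderIso, ← coe_pow]
  exact tendsto_translationNumber (commutatorProd f k).val t

/-- For every integer `g ≥ 1` and every real `c` with `1 - 2g < c ≤ 0`, there
exist `φ̃₁, …, φ̃_{2g} ∈ 𝒯` such that the translation number
`lim_{n → ∞} (ψⁿ t - t)/n` of the product of commutators
`ψ = [φ̃₁, φ̃₂] ∘ ⋯ ∘ [φ̃_{2g-1}, φ̃_{2g}]` equals `c`. -/
theorem exists_commutator_product_translation_number (g : ℕ) (hg : 1 ≤ g)
    (c : ℝ) (hc₁ : 1 - 2 * g < c) (hc₂ : c ≤ 0) :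
    ∃ φ : Fin (2 * g) → ℝ ≃o ℝ, (∀ i, CircleLift (φ i)) ∧
      ∀ t : ℝ, Filter.Tendsto
        (fun n : ℕ =>
          ((⇑(composeList (List.ofFn fun i : Fin g =>
              commOI (φ ⟨2 * i.1, by have := i.2; omega⟩)
                (φ ⟨2 * i.1 + 1, by have := i.2; omega⟩))))^[n] t - t) / (n : ℝ))
        Filter.atTop (nhds c) := by
  exact exists_commutator_product_translation_number_general g c <|
    abs_le.2 ⟨by linarith, by linarith⟩
end
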